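/- For n ≤ 7, the operators in End(V^⊗n), dim V = 2, induced by the involutions of S_n are linearly independent, while for n = 8 they are linearly dependent (there are 764 involutions but the symmetric part of Σ_8 has dimension 750). -/

import Mathlib

/-- The operator on `V^⊗n` (here realized as `(Fin n → Fin d) → ℂ`, `dim V = d`)
induced by a permutation `σ ∈ Sₙ` permuting the tensor factors. -/
def permOp (d n : ℕ) (σ : Equiv.Perm (Fin n)) :
    Module.End ℂ ((Fin n → Fin d) → ℂ) where
  toFun f := fun x => f (x ∘ σ)
  map_add' _ _ := rfl
  map_smul' _ _ := rfl

namespace InvOp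

def pl : Fin 4 → Fin 2 → Fin 2 → ℤ
  | 0, u, v => if u = v then 1 else 0
  | 1, u, v => if u = v then 0 else 1
  | 2, u, v => if u = v then (if u = 0 then 1 else -1) else 0
  | 3, u, v => if u = v then 0 else (if u = 0 then 1 else -1)

lemma pl_tr : ∀ a : Fin 4, a ≠ 0 → ∑ u, pl a u u = 0 := by decide
lemma pl_or : ∀ a b : Fin 4, a ≠ b → ∑ u, ∑ v, pl a u v * pl b v u = 0 := by decide
lemma pl_or' : ∀ a b : Fin 4, a ≠ b → ∑ u, ∑ v, pl a u v * pl b u v = 0 := by decide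
lemma pl_or'' : ∀ a b : Fin 4, a ≠ b → ∑ u, ∑ v, pl a v u * pl b u v = 0 := by decide
lemma pl_or''' : ∀ a b : Fin 4, a ≠ b → ∑ u, ∑ v, pl a v u * pl b v u = 0 := by decide
lemma pl_val : ∀ (a : Fin 4) (u v : Fin 2), pl a u v ≠ 0 → pl a u v * pl a u v = 1 := by decide

def flip (n : ℕ) (j : Fin n) (x : Fin n → Fin 2) : Fin n → Fin 2 := Function.update x j (1 - x j)

lemma flip_inv (n : ℕ) (j : Fin n) : Function.Involutive (flip n j) := by
  intro x; simp [flip]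

lemma sum_update {n : ℕ} (j : Fin n) (h : (Fin n → Fin 2) → ℤ) :
    ∑ x, ∑ u, h (Function.update x j u) = 2 * ∑ x, h x := by
  have h1 : ∀ x : Fin n → Fin 2, ∑ u, h (Function.update x j u) = h x + h (flip n j x) := by
    intro x
    rw [Fin.sum_univ_two]
    have : x j = 0 ∨ x j = 1 := by
      generalize x j = u; revert u; decide
    rcases this with e | e
    · have : Function.update x j 0 = x := by rw [← e]; simp
      rw [this]; simp [flip, e]
    · have : Function.update x j 1 = x := by rw [← e]; simp
      rw [this, add_comm]; simp [flip, e]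
  simp_rw [h1]
  rw [Finset.sum_add_distrib, two_mul]
  congr 1
  exact Equiv.sum_comp (flip_inv n j).toPerm h

lemma van1 {n : ℕ} (N : Fin n → Fin 2 → Fin 2 → ℤ) (τ : Equiv.Perm (Fin n)) (j : Fin n)
    (hj : τ j = j) (h0 : ∑ u, N j u u = 0) :
    ∑ x : Fin n → Fin 2, ∏ i, N i (x i) (x (τ i)) = 0 := by
  have := sum_update j (fun x => ∏ i, N i (x i) (x (τ i)))
  suffices h : ∑ x, ∑ u, (fun x : Fin n → Fin 2 => ∏ i, N i (x i) (x (τ i)))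
      (Function.update x j u) = 0 by
    rw [h] at this; simpa using this.symm
  apply Finset.sum_eq_zero
  intro x _
  have : ∀ u, ∏ i, N i (Function.update x j u i) (Function.update x j u (τ i))
      = N j u u * ∏ i ∈ Finset.univ.erase j, N i (x i) (x (τ i)) := by
    intro u
    rw [← Finset.mul_prod_erase _ _ (Finset.mem_univ j)]
    congr 1
    · simp [hj]
    · apply Finset.prod_congr rfl
      intro i hi
      have hi' : i ≠ j := Finset.ne_of_mem_erase hi
      have : τ i ≠ j := fun e => hi' (τ.injective (e.trans hj.symm))
      simp [hi', this]
  simp only [this]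
  rw [← Finset.sum_mul, h0, zero_mul]

lemma van2 {n : ℕ} (N : Fin n → Fin 2 → Fin 2 → ℤ) (τ : Equiv.Perm (Fin n)) (j k : Fin n)
    (hjk : j ≠ k) (hj : τ j = k) (hk : τ k = j) (h0 : ∑ u, ∑ v, N j u v * N k v u = 0) :
    ∑ x : Fin n → Fin 2, ∏ i, N i (x i) (x (τ i)) = 0 := by
  have h1 := sum_update k (fun x => ∏ i, N i (x i) (x (τ i)))
  have h2 := sum_update j (fun x => ∑ v, (fun x : Fin n → Fin 2 => ∏ i, N i (x i) (x (τ i)))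
      (Function.update x k v))
  suffices h : ∑ x, ∑ u, ∑ v, (fun x : Fin n → Fin 2 => ∏ i, N i (x i) (x (τ i)))
      (Function.update (Function.update x j u) k v) = 0 by
    rw [h, h1] at h2; simpa using h2.symm
  apply Finset.sum_eq_zero
  intro x _
  have : ∀ u v, ∏ i, N i (Function.update (Function.update x j u) k v i)
        (Function.update (Function.update x j u) k v (τ i))
      = (N j u v * N k v u) * ∏ i ∈ (Finset.univ.erase j).erase k, N i (x i) (x (τ i)) := by
    intro u v
    rw [← Finset.mul_prod_erase _ _ (Finset.mem_univ j),
      ← Finset.mul_prod_erase (Finset.univ.erase j) _ (a := k) (by simp [hjk.symm]), mul_assoc]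
    congr 1
    · simp [hj, hjk]
    congr 1
    · simp [hk, hjk]
    · apply Finset.prod_congr rfl
      intro i hi
      simp only [Finset.mem_erase, Finset.mem_univ, and_true] at hi
      have h3 : τ i ≠ j := fun e => hi.1 (τ.injective (e.trans hk.symm))
      have h4 : τ i ≠ k := fun e => hi.2 (τ.injective (e.trans hj.symm))
      simp [hi.1, hi.2, h3, h4]
  simp only [this]
  simp_rw [← Finset.sum_mul]
  rw [h0, zero_mul]

lemma inv_apply {n : ℕ} {s : Equiv.Perm (Fin n)} (hs : s * s = 1) (i : Fin n) : s (s i) = i := by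
  rw [← Equiv.Perm.mul_apply, hs]; rfl

lemma coloring {n : ℕ} (hn : n ≤ 7) (s : Equiv.Perm (Fin n)) (hs : s * s = 1) :
    ∃ a : Fin n → Fin 4, (∀ i, a (s i) = a i) ∧ (∀ i, s i = i ↔ a i = 0) ∧
      (∀ i j, s i ≠ i → a i = a j → j = i ∨ j = s i) := by
  classical
  have hss := inv_apply hs
  let M : Finset (Fin n) := Finset.univ.filter (fun i => i < s i)
  have hM : M.card ≤ 3 := by
    have hd : Disjoint M (M.map s.toEmbedding) := by
      rw [Finset.disjoint_left]
      intro i hi hi'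
      simp only [M, Finset.mem_filter, Finset.mem_univ, true_and, Finset.mem_map] at hi hi'
      obtain ⟨k, hk, rfl⟩ := hi'
      simp only [Equiv.coe_toEmbedding, hss] at hi
      exact absurd hk (not_lt.2 hi.le)
    have := Finset.card_le_univ (M ∪ M.map s.toEmbedding)
    rw [Finset.card_union_of_disjoint hd, Finset.card_map, Fintype.card_fin] at this
    omega
  obtain ⟨e⟩ : Nonempty (M ↪ Fin 3) := Function.Embedding.nonempty_of_card_le (by simpa using hM)
  have hmem : ∀ i, i ∈ M ↔ i < s i := by intro i; simp [M]
  let a : Fin n → Fin 4 := fun i => if h : i ∈ M then (e ⟨i, h⟩).succ else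
    if h : s i ∈ M then (e ⟨s i, h⟩).succ else 0
  -- representative
  have hrep : ∀ i, s i ≠ i → ∃ r, ∃ h : r ∈ M, (i = r ∨ i = s r) ∧ a i = (e ⟨r, h⟩).succ := by
    intro i hi
    by_cases h : i ∈ M
    · exact ⟨i, h, Or.inl rfl, by simp [a, h]⟩
    · have h' : s i ∈ M := by
        rw [hmem] at h ⊢
        rw [hss]; exact lt_of_le_of_ne (not_lt.1 h) hi
      exact ⟨s i, h', Or.inr (hss i).symm, by simp [a, h, h']⟩
  have hz : ∀ i, s i = i → a i = 0 := by
    intro i hi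
    have : i ∉ M := by rw [hmem, hi]; exact lt_irrefl _
    simp [a, hi, this]
  have hz' : ∀ i, s i = i ↔ a i = 0 := by
    intro i
    refine ⟨hz i, fun h => ?_⟩
    by_contra hi
    obtain ⟨r, hr, _, h2⟩ := hrep i hi
    rw [h2] at h; exact absurd h (Fin.succ_ne_zero _)
  refine ⟨a, ?_, hz', ?_⟩
  · intro i
    by_cases hi : s i = i
    · rw [hi]
    by_cases h : i ∈ M
    · have h' : s i ∉ M := by
        rw [hmem] at h ⊢; rw [hss]; exact not_lt.2 h.le
      have h3 : s (s i) ∈ M := by rw [hss]; exact h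
      simp [a, h, h', hss]
    · have h' : s i ∈ M := by
        rw [hmem] at h ⊢
        rw [hss]; exact lt_of_le_of_ne (not_lt.1 h) hi
      simp [a, h, h']
  · intro i j hi hij
    have hj : s j ≠ j := by
      rw [Ne, hz', ← hij, ← hz']; exact hi
    obtain ⟨r, hr, h1, h2⟩ := hrep i hi
    obtain ⟨r', hr', h1', h2'⟩ := hrep j hj
    rw [h2, h2'] at hij
    have : r = r' := by simpa using hij
    subst this
    rcases h1 with rfl | rfl <;> rcases h1' with rfl | rfl <;> simp [hss]

lemma functional {n : ℕ} (hn : n ≤ 7) (s : Equiv.Perm (Fin n)) (hs : s * s = 1) :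
    ∃ N : Fin n → Fin 2 → Fin 2 → ℤ,
      (∑ x : Fin n → Fin 2, ∏ i, N i (x i) (x (s i))) ≠ 0 ∧
      ∀ τ : Equiv.Perm (Fin n), τ * τ = 1 →
        (∑ x : Fin n → Fin 2, ∏ i, N i (x i) (x (τ i))) ≠ 0 → ∀ i, s i ≠ i → τ i = s i := by
  obtain ⟨a, ha, hz, hc⟩ := coloring hn s hs
  have hss := inv_apply hs
  refine ⟨fun i u v => if i ≤ s i then pl (a i) u v else pl (a i) v u, ?_, ?_⟩
  · have hsym : ∀ (x : Fin n → Fin 2) i,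
        (if s i ≤ s (s i) then pl (a (s i)) (x (s i)) (x (s (s i)))
          else pl (a (s i)) (x (s (s i))) (x (s i))) =
        (if i ≤ s i then pl (a i) (x i) (x (s i)) else pl (a i) (x (s i)) (x i)) := by
      intro x i
      rw [hss, ha]
      rcases lt_trichotomy i (s i) with h | h | h
      · rw [if_neg (not_le.2 h), if_pos h.le]
      · rw [← h]
      · rw [if_pos h.le, if_neg (not_le.2 h)]
    have hone : ∀ (x : Fin n → Fin 2),
        (∀ i, (if i ≤ s i then pl (a i) (x i) (x (s i)) else pl (a i) (x (s i)) (x i)) ≠ 0) →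
        ∏ i, (if i ≤ s i then pl (a i) (x i) (x (s i)) else pl (a i) (x (s i)) (x i)) = 1 := by
      intro x hx
      refine Finset.prod_involution (fun i _ => s i) ?_ ?_ (by simp) (by simp [hss])
      · intro i _
        rw [hsym]
        have := hx i
        split_ifs at this ⊢ <;> exact pl_val _ _ _ this
      · intro i _ h e
        have h0 := (hz i).1 e
        apply h
        simp [e, h0, pl]
    apply ne_of_gt
    apply Finset.sum_pos'
    · intro x _
      by_cases hx : ∀ i, (if i ≤ s i then pl (a i) (x i) (x (s i)) else pl (a i) (x (s i)) (x i)) ≠ 0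
      · rw [hone x hx]; norm_num
      · push Not at hx
        obtain ⟨i, hi⟩ := hx
        rw [Finset.prod_eq_zero (Finset.mem_univ i) hi]
    · refine ⟨fun i => if i ≤ s i ∨ a i = 2 then 0 else 1, Finset.mem_univ _, ?_⟩
      rw [hone]
      · norm_num
      · intro i
        rw [hss, ha]
        have hh : i = s i → a i = 0 := fun h => (hz i).1 h.symm
        rcases lt_trichotomy i (s i) with h | h | h
        · have h' : a i ≠ 0 := fun e => h.ne ((hz i).2 e).symm
          simp only [h.le, not_le.2 h, if_true, true_or, false_or]
          revert h'; generalize a i = b; revert b; decide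
        · rw [← h, hh h]; simp [pl]
        · have h' : a i ≠ 0 := fun e => h.ne ((hz i).2 e)
          simp only [h.le, not_le.2 h, if_true, if_false, true_or, false_or]
          revert h'; generalize a i = b; revert b; decide
  · intro τ hτ hne i hi
    by_contra hcon
    apply hne
    have hai : a i ≠ 0 := fun e => hi ((hz i).2 e)
    by_cases h1 : τ i = i
    · apply van1 (fun i u v => if i ≤ s i then pl (a i) u v else pl (a i) v u) τ i h1
      have := pl_tr (a i) hai
      simpa using this
    · have hne' : a i ≠ a (τ i) := by
        intro e
        rcases hc i (τ i) hi e with h | h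
        · exact h1 h
        · exact hcon h
      apply van2 (fun i u v => if i ≤ s i then pl (a i) u v else pl (a i) v u) τ i (τ i) (Ne.symm h1) rfl (inv_apply hτ i)
      split_ifs
      · exact pl_or _ _ hne'
      · exact pl_or' _ _ hne'
      · exact pl_or''' _ _ hne'
      · exact pl_or'' _ _ hne'

theorem part1 (n : ℕ) (hn : n ≤ 7) : LinearIndependent ℂ
        (fun σ : {σ : Equiv.Perm (Fin n) // σ * σ = 1} => permOp 2 n σ.1) := by
  classical
  rw [Fintype.linearIndependent_iff]
  intro c hc
  by_contra hcon
  push Not at hcon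
  obtain ⟨σ, hσ⟩ := hcon
  obtain ⟨s, hs, hmax⟩ := Finset.exists_max_image
    (Finset.univ.filter (fun σ : {σ : Equiv.Perm (Fin n) // σ * σ = 1} => c σ ≠ 0))
    (fun σ => σ.1.support.card) ⟨σ, by simp [hσ]⟩
  simp only [Finset.mem_filter, Finset.mem_univ, true_and] at hs hmax
  obtain ⟨N, hN, hN'⟩ := functional hn s.1 s.2
  have key : ∑ τ : {σ : Equiv.Perm (Fin n) // σ * σ = 1}, c τ *
      ((∑ x : Fin n → Fin 2, ∏ i, N i (x i) (x (τ.1 i)) : ℤ) : ℂ) = 0 := by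
    have : ∀ x : Fin n → Fin 2, ∑ τ : {σ : Equiv.Perm (Fin n) // σ * σ = 1}, c τ *
        ((∏ i, N i (x i) (x (τ.1 i)) : ℤ) : ℂ) = 0 := by
      intro x
      have := congrArg (fun T : Module.End ℂ ((Fin n → Fin 2) → ℂ) =>
        T (fun y => ((∏ i, N i (x i) (y i) : ℤ) : ℂ)) x) hc
      simpa [LinearMap.sum_apply, permOp] using this
    simp_rw [Int.cast_sum, Finset.mul_sum]
    rw [Finset.sum_comm]
    exact Finset.sum_eq_zero (fun x _ => this x)
  rw [Finset.sum_eq_single s] at key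
  · rcases mul_eq_zero.1 key with h | h
    · exact hs h
    · exact hN (by exact_mod_cast h)
  · intro τ _ hτ
    by_contra h
    have h1 : c τ ≠ 0 := left_ne_zero_of_mul h
    have h2 := right_ne_zero_of_mul h
    have h3 := hN' τ.1 τ.2 (by exact_mod_cast h2)
    have hsub : s.1.support ⊆ τ.1.support := by
      intro i hi
      rw [Equiv.Perm.mem_support] at hi ⊢
      rw [h3 i hi]; exact hi
    have heq := Finset.eq_of_subset_of_card_le hsub (hmax τ h1)
    apply hτ
    apply Subtype.ext
    ext i : 1
    by_cases hi : s.1 i = i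
    · have : i ∉ τ.1.support := by rw [← heq]; simpa using hi
      rw [hi]; simpa using this
    · exact h3 i hi
  · simp

end InvOp

namespace InvOp

lemma inv_iff (σ : Equiv.Perm (Fin 8)) : σ * σ = 1 ↔
    σ.cycleType = Multiset.replicate σ.cycleType.card 2 := by
  constructor
  · intro h
    rw [Multiset.eq_replicate]
    refine ⟨rfl, fun b hb => ?_⟩
    have h1 := Equiv.Perm.dvd_of_mem_cycleType hb
    have h2 : orderOf σ ∣ 2 := orderOf_dvd_of_pow_eq_one (by rw [sq, h])
    have h3 := Equiv.Perm.two_le_of_mem_cycleType hb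
    exact le_antisymm (Nat.le_of_dvd (by norm_num) (h1.trans h2)) h3
  · intro h
    rw [← sq, ← orderOf_dvd_iff_pow_eq_one, ← Equiv.Perm.lcm_cycleType, Multiset.lcm_dvd]
    intro b hb
    rw [h] at hb
    rw [Multiset.eq_of_mem_replicate hb]

theorem card764 : Fintype.card {σ : Equiv.Perm (Fin 8) // σ * σ = 1} = 764 := by
  classical
  rw [Fintype.card_subtype]
  rw [Finset.card_eq_sum_card_fiberwise (f := fun σ => σ.cycleType.card) (t := Finset.range 5)]
  · have : ∀ k, Finset.filter (fun σ : Equiv.Perm (Fin 8) => σ.cycleType.card = k)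
        (Finset.univ.filter (fun σ => σ * σ = 1)) =
        Finset.univ.filter (fun σ => σ.cycleType = Multiset.replicate k 2) := by
      intro k
      ext σ
      simp only [Finset.mem_filter, Finset.mem_univ, true_and, inv_iff]
      constructor
      · rintro ⟨h, rfl⟩; exact h
      · intro h
        have : σ.cycleType.card = k := by rw [h]; simp
        exact ⟨by rw [this]; exact h, this⟩
    simp only [this, Equiv.Perm.card_of_cycleType, Finset.sum_range_succ, Finset.sum_range_zero]
    simp [Multiset.replicate_succ, Nat.factorial]
  · intro σ hσ
    have h : σ * σ = 1 := by simpa using hσ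
    have h2 := Equiv.Perm.sum_cycleType σ
    have h3 := Finset.card_le_univ σ.support
    have h4 := (inv_iff σ).1 h
    have h5 : σ.cycleType.sum = σ.cycleType.card * 2 := by
      conv_lhs => rw [h4]
      simp
    simp only [Fintype.card_fin] at h3
    simp only [Finset.coe_range, Set.mem_Iio]
    omega

/-- 321-avoiding permutations -/
def Av (g : Equiv.Perm (Fin 8)) : Prop := ∀ i j k : Fin 8, i < j → j < k → ¬ (g j < g i ∧ g k < g j)

instance : DecidablePred Av := fun g => by unfold Av; infer_instance

lemma Av.inv {g : Equiv.Perm (Fin 8)} (h : Av g) : Av g⁻¹ := by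
  intro i j k hij hjk ⟨h1, h2⟩
  exact h _ _ _ h2 h1 (by simpa using ⟨hjk, hij⟩)

def lx (g : Equiv.Perm (Fin 8)) : Lex (Fin 8 → Fin 8) := toLex (g : Fin 8 → Fin 8)

lemma lx_inj : Function.Injective lx := fun _ _ h => DFunLike.coe_injective (toLex.injective h)

lemma lx_lt {g h : Equiv.Perm (Fin 8)} (i : Fin 8) (h1 : ∀ j < i, g j = h j) (h2 : g i < h i) :
    lx g < lx h := ⟨i, h1, h2⟩

lemma permOp_mul (d n : ℕ) (g h : Equiv.Perm (Fin n)) :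
    permOp d n (g * h) = permOp d n g * permOp d n h := rfl

/-- matrix entry functional -/
def ent (x y : Fin 8 → Fin 2) : Module.End ℂ ((Fin 8 → Fin 2) → ℂ) →ₗ[ℂ] ℂ where
  toFun T := T (Pi.single y 1) x
  map_add' _ _ := rfl
  map_smul' _ _ := rfl

lemma ent_permOp (x y : Fin 8 → Fin 2) (g : Equiv.Perm (Fin 8)) :
    ent x y (permOp 2 8 g) = if x ∘ g = y then 1 else 0 := by
  show (Pi.single y 1 : (Fin 8 → Fin 2) → ℂ) (x ∘ g) = _
  rw [Pi.single_apply]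

lemma exists_ent {g : Equiv.Perm (Fin 8)} (hg : Av g) : ∃ x y : Fin 8 → Fin 2,
    ent x y (permOp 2 8 g) = 1 ∧
    ∀ h : Equiv.Perm (Fin 8), lx h ≤ lx g → h ≠ g → ent x y (permOp 2 8 h) = 0 := by
  classical
  let y : Fin 8 → Fin 2 := fun i => if ∀ j < i, g j < g i then 1 else 0
  have hy : ∀ i j, y i = y j → i < j → g i < g j := by
    intro i j hij hlt
    by_cases h1 : ∀ k < j, g k < g j
    · exact h1 i hlt
    · have h2 : ¬ ∀ k < i, g k < g i := by
        intro h2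
        simp only [y] at hij
        rw [if_pos h2, if_neg h1] at hij
        exact absurd hij (by decide)
      push Not at h2
      obtain ⟨k, hk, hk2⟩ := h2
      have hk3 : g i < g k := lt_of_le_of_ne hk2 (fun e => hk.ne' (g.injective e))
      by_contra hcon
      have : g j < g i := lt_of_le_of_ne (not_lt.1 hcon) (fun e => hlt.ne' (g.injective e))
      exact hg k i j hk hlt ⟨hk3, this⟩
  refine ⟨y ∘ g.symm, y, ?_, ?_⟩
  · rw [ent_permOp, if_pos]; funext i; simp
  · intro h hle hne
    rw [ent_permOp, if_neg]
    intro he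
    have hlt : lx h < lx g := lt_of_le_of_ne hle (fun e => hne (lx_inj e))
    obtain ⟨i, h1, h2⟩ := hlt
    change ∀ j < i, h j = g j at h1
    change h i < g i at h2
    set k := g.symm (h i) with hk
    have hk' : h i = g k := by simp [hk]
    have hyk : y k = y i := congrFun he i
    have hik : i < k := by
      rcases lt_trichotomy i k with h' | h' | h'
      · exact h'
      · rw [hk', ← h'] at h2; exact absurd h2 (lt_irrefl _)
      · have := h1 k h'
        rw [← hk'] at this
        exact absurd (h.injective this) h'.ne
    have := hy i k hyk.symm hik
    rw [← hk'] at this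
    exact absurd this (not_lt.2 h2.le)

def sy (g : Equiv.Perm (Fin 8)) : Module.End ℂ ((Fin 8 → Fin 2) → ℂ) :=
  permOp 2 8 g + permOp 2 8 g⁻¹

lemma sy_inv (g : Equiv.Perm (Fin 8)) : sy g⁻¹ = sy g := by
  simp [sy, add_comm]

/-- representatives modulo inversion -/
abbrev Q := {g : Equiv.Perm (Fin 8) // Av g ∧ lx g ≤ lx g⁻¹}

lemma indep : LinearIndependent ℂ (fun g : Q => sy g.1) := by
  classical
  rw [Fintype.linearIndependent_iff]
  intro c hc
  by_contra hcon
  push Not at hcon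
  obtain ⟨σ, hσ⟩ := hcon
  obtain ⟨s, hs, hmax⟩ := Finset.exists_max_image
    (Finset.univ.filter (fun σ : Q => c σ ≠ 0))
    (fun σ => lx σ.1⁻¹) ⟨σ, by simp [hσ]⟩
  simp only [Finset.mem_filter, Finset.mem_univ, true_and] at hs hmax
  obtain ⟨x, y, h1, h2⟩ := exists_ent s.2.1.inv
  have key := congrArg (ent x y) hc
  rw [map_sum, map_zero, Finset.sum_eq_single s] at key
  · rw [map_smul, smul_eq_mul, mul_eq_zero] at key
    rcases key with h | h
    · exact hs h
    · rw [sy, map_add, h1, ent_permOp] at h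
      split_ifs at h <;> norm_num at h
  · intro t _ hts
    by_cases ht : c t = 0
    · simp [ht]
    have h3 := hmax t ht
    have h4 := t.2.2.trans h3
    have e1 : t.1⁻¹ ≠ s.1⁻¹ := fun e => hts (Subtype.ext (inv_injective e))
    have e2 : t.1 ≠ s.1⁻¹ := by
      intro e
      have h5 : lx t.1⁻¹ ≤ lx t.1 := by
        rw [e] at h3 ⊢
        exact h3
      have h6 := lx_inj (le_antisymm t.2.2 h5)
      exact e1 (h6.symm.trans e)
    rw [map_smul, sy, map_add, h2 _ h4 e2, h2 _ h3 e1]; simp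
  · simp

open Equiv in
lemma sw3 {i j k : Fin 8} (hij : i ≠ j) (hjk : j ≠ k) (hik : i ≠ k) :
    swap j k * swap i j = swap i j * swap i k ∧ swap i j * swap j k = swap j k * swap i k ∧
    swap j k * swap i j = swap i k * swap j k ∧ swap i j * swap j k = swap i k * swap i j := by
  refine ⟨?_, ?_, ?_, ?_⟩ <;> refine Equiv.ext fun t => ?_ <;>
    simp only [Perm.mul_apply, swap_apply_def] <;> grind

open Equiv in
lemma rel {i j k : Fin 8} (hij : i ≠ j) (hjk : j ≠ k) (hik : i ≠ k) :
    (1 : Module.End ℂ ((Fin 8 → Fin 2) → ℂ)) = permOp 2 8 (swap i j) + permOp 2 8 (swap j k)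
      + permOp 2 8 (swap i k) - permOp 2 8 (swap i j * swap j k)
      - permOp 2 8 (swap j k * swap i j) := by
  refine LinearMap.ext fun f => funext fun z => ?_
  show f z = f (z ∘ swap i j) + f (z ∘ swap j k) + f (z ∘ swap i k)
    - f (z ∘ (swap i j * swap j k : Perm (Fin 8))) - f (z ∘ (swap j k * swap i j : Perm (Fin 8)))
  have hz : z i = z j ∨ z j = z k ∨ z i = z k := by
    generalize z i = a; generalize z j = b; generalize z k = c
    revert a b c; decide
  have sw : ∀ {a b : Fin 8}, z a = z b → z ∘ swap a b = z := by
    intro a b h; funext t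
    simp only [Function.comp, swap_apply_def]
    split_ifs <;> simp_all
  rcases hz with h | h | h
  · have e1 : z ∘ (swap i j * swap j k : Perm (Fin 8)) = z ∘ swap j k := by
      rw [Perm.coe_mul, ← Function.comp_assoc, sw h]
    have e2 : z ∘ (swap j k * swap i j : Perm (Fin 8)) = z ∘ swap i k := by
      have : swap j k * swap i j = swap i j * swap i k := by
        exact (sw3 hij hjk hik).1
      rw [this, Perm.coe_mul, ← Function.comp_assoc, sw h]
    rw [e1, e2, sw h]; ring
  · have e1 : z ∘ (swap j k * swap i j : Perm (Fin 8)) = z ∘ swap i j := by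
      rw [Perm.coe_mul, ← Function.comp_assoc, sw h]
    have e2 : z ∘ (swap i j * swap j k : Perm (Fin 8)) = z ∘ swap i k := by
      have : swap i j * swap j k = swap j k * swap i k := by
        exact (sw3 hij hjk hik).2.1
      rw [this, Perm.coe_mul, ← Function.comp_assoc, sw h]
    rw [e1, e2, sw h]; ring
  · have e1 : z ∘ (swap j k * swap i j : Perm (Fin 8)) = z ∘ swap j k := by
      have : swap j k * swap i j = swap i k * swap j k := by
        exact (sw3 hij hjk hik).2.2.1
      rw [this, Perm.coe_mul, ← Function.comp_assoc, sw h]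
    have e2 : z ∘ (swap i j * swap j k : Perm (Fin 8)) = z ∘ swap i j := by
      have : swap i j * swap j k = swap i k * swap i j := by
        exact (sw3 hij hjk hik).2.2.2
      rw [this, Perm.coe_mul, ← Function.comp_assoc, sw h]
    rw [e1, e2, sw h]; ring

open Equiv in
lemma rel_sy (g : Perm (Fin 8)) {i j k : Fin 8} (hij : i ≠ j) (hjk : j ≠ k) (hik : i ≠ k) :
    sy g = sy (g * swap i j) + sy (g * swap j k) + sy (g * swap i k)
      - sy (g * (swap i j * swap j k)) - sy (g * (swap j k * swap i j)) := by
  have r := rel hij hjk hik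
  have r1 : permOp 2 8 g = permOp 2 8 g * 1 := by rw [mul_one]
  have r2 : permOp 2 8 g⁻¹ = 1 * permOp 2 8 g⁻¹ := by rw [one_mul]
  rw [r] at r1 r2
  unfold sy
  rw [r1, r2]
  simp only [mul_inv_rev, swap_inv, permOp_mul, mul_add, mul_sub, add_mul, sub_mul, mul_assoc]
  abel

open Equiv in
lemma mem_span (g : Perm (Fin 8)) : sy g ∈ Submodule.span ℂ (Set.range (fun g : Q => sy g.1)) := by
  suffices H : ∀ a : Lex (Fin 8 → Fin 8), ∀ g : Perm (Fin 8), lx g = a →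
      sy g ∈ Submodule.span ℂ (Set.range (fun g : Q => sy g.1)) from H _ g rfl
  intro a
  induction a using WellFoundedLT.induction with
  | ind a ih =>
  rintro g rfl
  by_cases hg : Av g
  · rcases le_total (lx g) (lx g⁻¹) with h | h
    · exact Submodule.subset_span ⟨⟨g, hg, h⟩, rfl⟩
    · rw [← sy_inv]
      exact Submodule.subset_span ⟨⟨g⁻¹, hg.inv, by simpa using h⟩, rfl⟩
  · unfold Av at hg
    push Not at hg
    obtain ⟨i, j, k, hij, hjk, h1, h2⟩ := hg
    have hik := hij.trans hjk
    have lt1 : ∀ t < i, t ≠ i ∧ t ≠ j ∧ t ≠ k := fun t ht =>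
      ⟨ht.ne, (ht.trans hij).ne, (ht.trans hik).ne⟩
    have lt2 : ∀ t < j, t ≠ j ∧ t ≠ k := fun t ht => ⟨ht.ne, (ht.trans hjk).ne⟩
    rw [rel_sy g hij.ne hjk.ne hik.ne]
    refine sub_mem (sub_mem (add_mem (add_mem ?_ ?_) ?_) ?_) ?_ <;> refine ih _ ?_ _ rfl
    · refine lx_lt i (fun t ht => ?_) ?_
      · simp [swap_apply_of_ne_of_ne (lt1 t ht).1 (lt1 t ht).2.1]
      · simpa using h1
    · refine lx_lt j (fun t ht => ?_) ?_
      · simp [swap_apply_of_ne_of_ne (lt2 t ht).1 (lt2 t ht).2]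
      · simpa using h2
    · refine lx_lt i (fun t ht => ?_) ?_
      · simp [swap_apply_of_ne_of_ne (lt1 t ht).1 (lt1 t ht).2.2]
      · simpa using h2.trans h1
    · refine lx_lt i (fun t ht => ?_) ?_
      · simp [swap_apply_of_ne_of_ne (lt1 t ht).1 (lt1 t ht).2.1,
          swap_apply_of_ne_of_ne (lt1 t ht).2.1 (lt1 t ht).2.2]
      · simpa [swap_apply_of_ne_of_ne hij.ne hik.ne] using h1
    · refine lx_lt i (fun t ht => ?_) ?_
      · simp [swap_apply_of_ne_of_ne (lt1 t ht).1 (lt1 t ht).2.1,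
          swap_apply_of_ne_of_ne (lt1 t ht).2.1 (lt1 t ht).2.2]
      · simpa using h2.trans h1

/-! Counting -/

/-- the least top of an inversion (8 if there is none) -/
def top8 : List ℕ → ℕ
  | [] => 8
  | a :: l => bif l.any (fun b => Nat.blt b a) then
      (bif Nat.blt a (top8 l) then a else top8 l) else top8 l

lemma top8_iff (v : ℕ) (hv : v < 8) (l : List ℕ) :
    v ≤ top8 l ↔ l.Pairwise (fun a b => ¬ (a < v ∧ b < a)) := by
  induction l with
  | nil => simp [top8]; omega
  | cons a l ih =>
    rw [top8, List.pairwise_cons, ← ih]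
    by_cases h : l.any (fun b => Nat.blt b a) = true
    · rw [h, cond_true]
      simp only [List.any_eq_true, Nat.blt_eq] at h
      obtain ⟨b, hb, hba⟩ := h
      have e : (∀ b ∈ l, ¬ (a < v ∧ b < a)) ↔ v ≤ a :=
        ⟨fun h => not_lt.1 fun h' => h b hb ⟨h', hba⟩, fun h _ _ h' => absurd h'.1 (not_lt.2 h)⟩
      rw [e]
      by_cases h2 : a < top8 l
      · have : Nat.blt a (top8 l) = true := by rw [Nat.blt_eq]; exact h2
        rw [this, cond_true]; omega
      · have : Nat.blt a (top8 l) = false := by rw [← Bool.not_eq_true, Nat.blt_eq]; exact h2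
        rw [this, cond_false]; omega
    · rw [Bool.not_eq_true] at h
      rw [h, cond_false]
      rw [← Bool.not_eq_true] at h
      simp only [List.any_eq_true, Nat.blt_eq] at h
      refine ⟨fun h' => ⟨fun b hb hh => h ⟨b, hb, hh.2⟩, h'⟩, fun h' => h'.2⟩

def good (v : ℕ) (l : List ℕ) : Bool := Nat.ble v (top8 l) && l.all (fun a => !(Nat.beq a v))

lemma good_iff (v : ℕ) (l : List ℕ) : (v < 8 ∧ good v l = true) ↔
    (v < 8 ∧ v ∉ l ∧ l.Pairwise (fun a b => ¬ (a < v ∧ b < a))) := by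
  refine and_congr_right fun hv => ?_
  rw [good, Bool.and_eq_true, ← top8_iff v hv, Nat.ble_eq, and_comm]
  refine and_congr_left fun _ => ?_
  simp only [List.all_eq_true, Bool.not_eq_true', ← Bool.not_eq_true, Nat.beq_eq]
  exact ⟨fun h hv => h v hv rfl, fun h a ha e => h (e ▸ ha)⟩

def r8 : List ℕ := [0, 1, 2, 3, 4, 5, 6, 7]

lemma r8_eq : r8 = List.range 8 := by decide

def gen : ℕ → List (List ℕ)
  | 0 => [[]]
  | k + 1 => (gen k).flatMap (fun l => (r8.filter (good · l)).map (· :: l))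

lemma mem_gen (k : ℕ) (l : List ℕ) : l ∈ gen k ↔ l.length = k ∧ (∀ a ∈ l, a < 8) ∧ l.Nodup ∧
    l.Triplewise (fun a b c => ¬ (b < a ∧ c < b)) := by
  induction k generalizing l with
  | zero =>
    simp only [gen, List.mem_singleton]
    constructor
    · rintro rfl; simp
    · intro h; exact List.length_eq_zero_iff.1 h.1
  | succ k ih =>
    cases l with
    | nil => simp [gen]
    | cons v l =>
      simp only [gen, r8_eq, List.mem_flatMap, List.mem_map, List.mem_filter, List.mem_range,
        List.cons.injEq, List.length_cons, List.nodup_cons, List.triplewise_cons, good_iff,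
        List.forall_mem_cons, Nat.add_right_cancel_iff, ih]
      constructor
      · rintro ⟨l', h, v', h', rfl, rfl⟩; tauto
      · intro h; exact ⟨l, by tauto, v, by tauto, rfl, rfl⟩

lemma nodup_gen (k : ℕ) : (gen k).Nodup := by
  induction k with
  | zero => simp [gen]
  | succ k ih =>
    rw [gen, r8_eq, List.nodup_flatMap]
    refine ⟨fun l _ => ?_, ?_⟩
    · exact (List.nodup_range.filter _).map (fun a b h => by simpa using h)
    · refine ih.imp ?_
      intro l l' hne t ht ht'
      simp only [List.mem_map] at ht ht'
      obtain ⟨a, _, rfl⟩ := ht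
      obtain ⟨b, _, h⟩ := ht'
      simp only [List.cons.injEq] at h
      exact hne h.2.symm

/-- numeric lexicographic test `l ≤ m` -/
def lle : List ℕ → List ℕ → Bool
  | [], _ => true
  | _ :: _, [] => true
  | a :: l, b :: m => Nat.blt a b || (Nat.beq a b && lle l m)

def linv (l : List ℕ) : List ℕ := r8.map (fun i => l.idxOf i)

def code (g : Equiv.Perm (Fin 8)) : List ℕ := List.ofFn (fun i => (g i : ℕ))


lemma lle_false (n : ℕ) (f f' : Fin n → Fin 8) :
    lle (List.ofFn (fun i => (f i : ℕ))) (List.ofFn (fun i => (f' i : ℕ))) = false ↔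
      ∃ i, (∀ j < i, f' j = f j) ∧ f' i < f i := by
  induction n with
  | zero => simp [lle]
  | succ n ih =>
    rw [List.ofFn_succ, List.ofFn_succ, lle, Bool.or_eq_false_iff, Bool.and_eq_false_iff,
      ih (fun i => f i.succ) (fun i => f' i.succ), Fin.exists_fin_succ]
    simp only [Fin.forall_fin_succ, Fin.succ_lt_succ_iff, Fin.succ_pos, Fin.not_lt_zero,
      forall_true_left, false_imp_iff, implies_true, true_and]
    have e1 : Nat.blt (f 0 : ℕ) (f' 0) = false ↔ ¬ f 0 < f' 0 := by
      rw [← Bool.not_eq_true, Nat.blt_eq]; rfl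
    have e2 : Nat.beq (f 0 : ℕ) (f' 0) = false ↔ f 0 ≠ f' 0 := by
      rw [← Bool.not_eq_true, Nat.beq_eq, Ne, Fin.ext_iff]
    rw [e1, e2]
    constructor
    · rintro ⟨h1, h2 | ⟨i, h2, h3⟩⟩
      · exact Or.inl (lt_of_le_of_ne (not_lt.1 h1) h2.symm)
      · rcases (not_lt.1 h1).lt_or_eq with h | h
        · exact Or.inl h
        · exact Or.inr ⟨i, ⟨h, h2⟩, h3⟩
    · rintro (h | ⟨i, ⟨h1, h2⟩, h3⟩)
      · exact ⟨not_lt.2 h.le, Or.inl h.ne'⟩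
      · exact ⟨not_lt.2 h1.le, Or.inr ⟨i, h2, h3⟩⟩

lemma lle_iff (g h : Equiv.Perm (Fin 8)) : lle (code g) (code h) = true ↔ lx g ≤ lx h := by
  rw [← not_lt, ← Bool.not_eq_false, code, code, lle_false]
  rfl

lemma code_getElem (g : Equiv.Perm (Fin 8)) (i : ℕ) (hi : i < (code g).length) :
    (code g)[i] = (g ⟨i, by simpa [code] using hi⟩ : ℕ) := by
  simp only [code, List.getElem_ofFn]

lemma code_nodup (g : Equiv.Perm (Fin 8)) : (code g).Nodup := by
  rw [code, List.nodup_ofFn]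
  exact Fin.val_injective.comp g.injective

lemma linv_code (g : Equiv.Perm (Fin 8)) : linv (code g) = code g⁻¹ := by
  apply List.ext_getElem
  · simp [linv, code, r8]
  · intro i h1 h2
    have hi : i < 8 := by simpa [linv, r8_eq] using h1
    rw [code_getElem]
    simp only [linv, r8_eq, List.getElem_map, List.getElem_range]
    have hl : ((g⁻¹ ⟨i, hi⟩ : Fin 8) : ℕ) < (code g).length := by simp [code]
    have : i = (code g)[((g⁻¹ ⟨i, hi⟩ : Fin 8) : ℕ)] := by
      rw [code_getElem]; simp
    conv_lhs => rw [this]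
    exact (code_nodup g).idxOf_getElem _ _

lemma code_inj : Function.Injective code := by
  intro g h e
  have := List.ofFn_injective e
  ext i
  exact congrFun this i

lemma code_tri (g : Equiv.Perm (Fin 8)) :
    (code g).Triplewise (fun a b c => ¬ (b < a ∧ c < b)) ↔ Av g := by
  rw [List.triplewise_iff_getElem]
  constructor
  · intro h i j k hij hjk
    have := h i j k hij hjk (by simp [code])
    simp only [code_getElem] at this
    exact this
  · intro h i j k hij hjk hk
    have hk' : k < 8 := by simpa [code] using hk
    simp only [code_getElem]
    exact h ⟨i, by omega⟩ ⟨j, by omega⟩ ⟨k, hk'⟩ hij hjk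

lemma exists_code (l : List ℕ) (h1 : l.length = 8) (h2 : ∀ a ∈ l, a < 8) (h3 : l.Nodup) :
    ∃ g, code g = l := by
  let f : Fin 8 → Fin 8 := fun i => ⟨l[(i : ℕ)], h2 _ (List.getElem_mem _)⟩
  have hf : Function.Injective f := by
    intro i j h
    have : l[(i : ℕ)] = l[(j : ℕ)] := congrArg Fin.val h
    exact Fin.ext ((h3.getElem_inj_iff).1 this)
  refine ⟨Equiv.ofBijective f (Finite.injective_iff_bijective.1 hf), ?_⟩
  apply List.ext_getElem
  · simp [code, h1]
  · intro i hi hi'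
    rw [code_getElem]; rfl

set_option maxRecDepth 100000 in
lemma count : ((gen 8).filter (fun l => lle l (linv l))).length = 750 := by
  decide +kernel


lemma cardQ : Fintype.card Q = 750 := by
  classical
  suffices key : (Finset.univ.filter (fun g => Av g ∧ lx g ≤ lx g⁻¹)).image code =
      ((gen 8).filter (fun l => lle l (linv l))).toFinset by
    rw [Fintype.card_subtype, ← Finset.card_image_of_injective _ code_inj, key,
      List.toFinset_card_of_nodup ((nodup_gen 8).filter _)]
    exact count
  ext l
  simp only [Finset.mem_image, Finset.mem_filter, Finset.mem_univ, true_and, List.mem_toFinset,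
    List.mem_filter, mem_gen]
  constructor
  · rintro ⟨g, ⟨h1, h2⟩, rfl⟩
    refine ⟨⟨by simp [code], ?_, code_nodup g, (code_tri g).2 h1⟩, ?_⟩
    · intro a ha
      simp only [code, List.mem_ofFn] at ha
      obtain ⟨i, rfl⟩ := ha
      exact (g i).2
    · rw [linv_code, lle_iff]; exact h2
  · rintro ⟨⟨h1, h2, h3, h4⟩, h5⟩
    obtain ⟨g, rfl⟩ := exists_code l h1 h2 h3
    rw [code_tri] at h4
    rw [linv_code, lle_iff] at h5
    exact ⟨g, ⟨h4, h5⟩, rfl⟩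

lemma span_eq : Submodule.span ℂ
        {f : Module.End ℂ ((Fin 8 → Fin 2) → ℂ) |
          ∃ g : Equiv.Perm (Fin 8), f = permOp 2 8 g + permOp 2 8 g⁻¹} =
    Submodule.span ℂ (Set.range (fun g : Q => sy g.1)) := by
  apply le_antisymm
  · rw [Submodule.span_le]
    rintro _ ⟨g, rfl⟩
    exact mem_span g
  · apply Submodule.span_mono
    rintro _ ⟨g, rfl⟩
    exact ⟨g.1, rfl⟩

lemma finrank_eq : Module.finrank ℂ (Submodule.span ℂ
        {f : Module.End ℂ ((Fin 8 → Fin 2) → ℂ) |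
          ∃ g : Equiv.Perm (Fin 8), f = permOp 2 8 g + permOp 2 8 g⁻¹}) = 750 := by
  rw [span_eq, finrank_span_eq_card indep, cardQ]

lemma dep : ¬ LinearIndependent ℂ
        (fun σ : {σ : Equiv.Perm (Fin 8) // σ * σ = 1} => permOp 2 8 σ.1) := by
  intro h
  have h1 := finrank_span_eq_card h
  rw [card764] at h1
  have h2 := finrank_eq
  have h3 : Submodule.span ℂ (Set.range
      (fun σ : {σ : Equiv.Perm (Fin 8) // σ * σ = 1} => permOp 2 8 σ.1)) ≤
      Submodule.span ℂ {f : Module.End ℂ ((Fin 8 → Fin 2) → ℂ) |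
          ∃ g : Equiv.Perm (Fin 8), f = permOp 2 8 g + permOp 2 8 g⁻¹} := by
    rw [Submodule.span_le]
    rintro _ ⟨σ, rfl⟩
    have e : σ.1⁻¹ = σ.1 := inv_eq_of_mul_eq_one_left σ.2
    have : permOp 2 8 σ.1 = (2⁻¹ : ℂ) • (permOp 2 8 σ.1 + permOp 2 8 σ.1⁻¹) := by
      rw [e, ← two_smul ℂ, smul_smul]; norm_num
    show permOp 2 8 σ.1 ∈ _
    rw [this]
    exact Submodule.smul_mem _ _ (Submodule.subset_span ⟨σ.1, rfl⟩)
  have h4 := Submodule.finrank_mono h3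
  omega

end InvOp

/-- For `n ≤ 7` the operators on `V^⊗n` (`dim V = 2`) induced by the involutions of `Sₙ`
are linearly independent, while for `n = 8` they are linearly dependent: there are
`764` involutions in `S₈` but the symmetric part of `Σ₈` has dimension `750`. -/
theorem involution_operators_independent_iff_n_le_seven :
    (∀ n : ℕ, n ≤ 7 →
      LinearIndependent ℂ
        (fun σ : {σ : Equiv.Perm (Fin n) // σ * σ = 1} => permOp 2 n σ.1)) ∧
    ¬ LinearIndependent ℂ
        (fun σ : {σ : Equiv.Perm (Fin 8) // σ * σ = 1} => permOp 2 8 σ.1) ∧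
    Fintype.card {σ : Equiv.Perm (Fin 8) // σ * σ = 1} = 764 ∧
    Module.finrank ℂ
      (Submodule.span ℂ
        {f : Module.End ℂ ((Fin 8 → Fin 2) → ℂ) |
          ∃ g : Equiv.Perm (Fin 8), f = permOp 2 8 g + permOp 2 8 g⁻¹}) = 750 := by
  exact ⟨InvOp.part1, InvOp.dep, InvOp.card764, InvOp.finrank_eq⟩
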